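/- For every n ≥ 2, every comparability graph G on 2n+1 vertices satisfies R(G) ≤ n = R(G_n); that is, G_n has the highest representation number among all comparability graphs on 2n+1 vertices. -/

import Mathlib

/-!
A transitive orientation makes the vertex set a finite strict order. A word that is a concatenation
of `k` linear extensions represents the comparability graph iff these extensions form a realizer, so
the upper bound is Hiraguchi's theorem (`hiraguchi`): a poset on `2 * n + 1 ≥ 5` points has dimension
at most `n`. If the width is at most `n`, then Dilworth's theorem (`dilworth`) yields a partition into
at most `n` chains, and the dimension is at most the number of chains (`exists_realizer_of_chains`). Otherwise
there is an antichain of `n + 1` points; it has dimension at most two together with two of the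
other `n` points (`base_two`), and each of the remaining `n - 2` points adds at most one
(`IsRealizer.insert_point`).

The crown with apex is a comparability graph, hence `n`-representable. For the lower bound, rotate a
`k`-uniform word so that it begins with the apex. All other letters alternate with the apex, so two
of them alternate with each other iff the `k` linear orders given by their `b`-th occurrences agree
on them (`alternate_iff_occBefore`). For each `i`, the nonadjacent vertices `i` and `i'` have to be
reversed by some order, and one order cannot reverse two such pairs (`CrownOrders.le_of_lt`).
-/

/-- Letters `x` and `y` alternate in the word `w` if the subsequence of `w` consisting of
all occurrences of `x` and `y` has no two equal consecutive letters (i.e. is of the form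
`xyxy⋯` or `yxyx⋯`). -/
def Alternate {V : Type*} [DecidableEq V] (w : List V) (x y : V) : Prop :=
  (w.filter (fun z => decide (z = x ∨ z = y))).Chain' (· ≠ ·)

/-- A word `w` over `V` represents the simple graph `G` if it contains every letter of `V`
and distinct letters alternate in `w` iff they are adjacent in `G`. -/
def Represents {V : Type*} [DecidableEq V] (w : List V) (G : SimpleGraph V) : Prop :=
  (∀ v : V, v ∈ w) ∧ ∀ x y : V, x ≠ y → (Alternate w x y ↔ G.Adj x y)

/-- A graph is word-representable if some word represents it. -/
def WordRepresentable {V : Type*} [DecidableEq V] (G : SimpleGraph V) : Prop :=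
  ∃ w : List V, Represents w G

/-- A graph is `k`-representable if some `k`-uniform word (every letter occurring
exactly `k` times) represents it. -/
def KRepresentable {V : Type*} [DecidableEq V] (G : SimpleGraph V) (k : ℕ) : Prop :=
  ∃ w : List V, (∀ v : V, w.count v = k) ∧ Represents w G

/-- An orientation of a simple graph `G`: each edge gets exactly one of its two directions. -/
structure GraphOrientation {V : Type*} (G : SimpleGraph V) where
  dir : V → V → Prop
  adj_iff : ∀ x y, G.Adj x y ↔ (dir x y ∨ dir y x)
  not_both : ∀ x y, ¬(dir x y ∧ dir y x)

/-- An orientation is acyclic if it has no directed cycle. -/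
def GraphOrientation.Acyclic {V : Type*} {G : SimpleGraph V} (o : GraphOrientation G) : Prop :=
  ∀ v : V, ¬ Relation.TransGen o.dir v v

/-- An orientation has no shortcut of length `k` if for every directed path
`v 0 → v 1 → ⋯ → v k` (with `k` edges) such that the edge `v 0 → v k` is present,
all edges `v i → v j` for `i < j` are present. -/
def GraphOrientation.NoShortcutOfLength {V : Type*} {G : SimpleGraph V}
    (o : GraphOrientation G) (k : ℕ) : Prop :=
  ∀ v : Fin (k + 1) → V,
    (∀ i : Fin k, o.dir (v i.castSucc) (v i.succ)) →
    o.dir (v 0) (v (Fin.last k)) →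
    ∀ i j : Fin (k + 1), i < j → o.dir (v i) (v j)

/-- An orientation is semi-transitive if it has no shortcut of any length:
for every directed path `v_1 → ⋯ → v_k`, either the edge `v_1 → v_k` is absent, or it is
present and all edges `v_i → v_j` for `i < j` are present. -/
def GraphOrientation.SemiTransitive {V : Type*} {G : SimpleGraph V}
    (o : GraphOrientation G) : Prop :=
  ∀ k : ℕ, o.NoShortcutOfLength k

/-- A graph is a comparability graph if it admits a transitive orientation. -/
def IsComparability {V : Type*} (G : SimpleGraph V) : Prop :=
  ∃ o : GraphOrientation G, ∀ x y z, o.dir x y → o.dir y z → o.dir x z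

/-- The crown graph `H_{n,n}`: bipartite with parts `{1,…,n}` and `{1',…,n'}`,
where `i` is adjacent to `j'` iff `i ≠ j`. -/
def crown (n : ℕ) : SimpleGraph (Fin n ⊕ Fin n) :=
  SimpleGraph.fromRel (fun a b =>
    match a, b with
    | Sum.inl i, Sum.inr j => i ≠ j
    | _, _ => False)

/-- The graph `G_n`: the crown graph `H_{n,n}` together with an all-adjacent apex vertex
(the apex is `none`). -/
def apexCrown (n : ℕ) : SimpleGraph (Option (Fin n ⊕ Fin n)) :=
  SimpleGraph.fromRel (fun a b =>
    match a, b with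
    | none, some _ => True
    | some u, some w => (crown n).Adj u w
    | _, _ => False)

/-! ### Realizers and Dilworth's theorem -/

/-- `A` is an antichain of `r`. For irreflexive `r` the case `x = y` imposes nothing. -/
def IsIndep {V : Type*} (r : V → V → Prop) (A : Finset V) : Prop :=
  ∀ x ∈ A, ∀ y ∈ A, ¬ r x y

/-- A realizer of the strict order `r` on `S`, given by keys: every `f` in `F` is strictly monotone,
and any two incomparable points are strictly separated, in either direction, by some key. Ties
between incomparable points are allowed, so that a key is a linear extension up to tie-breaking. -/
structure IsRealizer {V : Type*} (r : V → V → Prop) (S : Finset V) (F : List (V → ℕ)) : Prop where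
  mono : ∀ f ∈ F, ∀ x ∈ S, ∀ y ∈ S, r x y → f x < f y
  sep : ∀ x ∈ S, ∀ y ∈ S, x ≠ y → ¬ r x y → ¬ r y x → ∃ f ∈ F, f x < f y

section Poset

variable {V : Type*} [Fintype V] {r : V → V → Prop}

theorem exists_maximal_rel (hi : ∀ x, ¬ r x x) (ht : ∀ x y z, r x y → r y z → r x z)
    (S : Finset V) (hS : S.Nonempty) : ∃ a ∈ S, ∀ b ∈ S, ¬ r a b := by
  have : IsTrans V (flip r) := ⟨fun a b c h1 h2 => ht _ _ _ h2 h1⟩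
  have : Std.Irrefl (flip r) := ⟨fun a h => hi a h⟩
  obtain ⟨a, ha, h⟩ := (Finite.wellFounded_of_trans_of_irrefl (flip r)).has_min (S : Set V) hS
  exact ⟨a, ha, fun b hb => h b hb⟩

/-- Dilworth's theorem for the points of `S`: there are an antichain `A` and a partition into at
most `A.card` chains, the chain of `v` being labelled by `c v`. The proof is Galvin's: remove a maximal
element `a` and let `x i` be the top element of chain `i` lying in some maximum antichain. The `x i`
form an antichain, which either can be extended by `a`, or has an element `x i` below `a`. In the
latter case, removing `a` and the part of chain `i` up to `x i` lowers the width. -/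
theorem dilworth (hi : ∀ x, ¬ r x x) (ht : ∀ x y z, r x y → r y z → r x z) (S : Finset V) :
    ∃ (c : V → ℕ) (A : Finset V), A ⊆ S ∧ IsIndep r A ∧ (∀ v ∈ S, c v < A.card) ∧
      ∀ u ∈ S, ∀ v ∈ S, c u = c v → u = v ∨ r u v ∨ r v u := by
  classical
  induction S using Finset.strongInduction with
  | H S ih =>
  rcases S.eq_empty_or_nonempty with rfl | hS
  · exact ⟨fun _ => 0, ∅, by simp, by simp [IsIndep], by simp, by simp⟩
  obtain ⟨a, haS, hmax⟩ := exists_maximal_rel hi ht S hS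
  obtain ⟨c, A, hAS, hA, hc, hch⟩ := ih (S.erase a) (Finset.erase_ssubset haS)
  have hsub : S.erase a ⊆ S := Finset.erase_subset _ _
  -- An independent set of the maximum size `A.card` meets every chain.
  have hmeet : ∀ B ⊆ S.erase a, IsIndep r B → B.card = A.card →
      ∀ i < A.card, ∃ z ∈ B, c z = i := by
    intro B hB hBi hBc i hlt
    have himg : B.image c = Finset.range A.card := by
      apply Finset.eq_of_subset_of_card_le
      · intro j hj
        obtain ⟨z, hz, rfl⟩ := Finset.mem_image.1 hj
        exact Finset.mem_range.2 (hc z (hB hz))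
      · rw [Finset.card_range, ← hBc]
        apply le_of_eq
        symm
        apply Finset.card_image_of_injOn
        intro u hu v hv huv
        rcases hch u (hB hu) v (hB hv) huv with h | h | h
        · exact h
        · exact absurd h (hBi u hu v hv)
        · exact absurd h (hBi v hv u hu)
    have : i ∈ B.image c := himg ▸ Finset.mem_range.2 hlt
    simpa using this
  have hx : ∀ i, i < A.card → ∃ x, (x ∈ S.erase a ∧ c x = i ∧
      ∃ B ⊆ S.erase a, IsIndep r B ∧ B.card = A.card ∧ x ∈ B) ∧
      ∀ B ⊆ S.erase a, IsIndep r B → B.card = A.card → ∀ z ∈ B, c z = i → z = x ∨ r z x := by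
    intro i hlt
    obtain ⟨z, hzA, hz⟩ := hmeet A hAS hA rfl i hlt
    obtain ⟨x, hx, hxm⟩ := exists_maximal_rel hi ht
      ((S.erase a).filter fun x => c x = i ∧
        ∃ B ⊆ S.erase a, IsIndep r B ∧ B.card = A.card ∧ x ∈ B)
      ⟨z, Finset.mem_filter.2 ⟨hAS hzA, hz, A, hAS, hA, rfl, hzA⟩⟩
    obtain ⟨hx1, hx2⟩ := Finset.mem_filter.1 hx
    refine ⟨x, ⟨hx1, hx2⟩, fun B hB hBi hBc z hz hcz => ?_⟩
    rcases hch z (hB hz) x hx1 (hcz.trans hx2.1.symm) with h | h | h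
    · exact Or.inl h
    · exact Or.inr h
    · exact absurd h (hxm z (Finset.mem_filter.2 ⟨hB hz, hcz, B, hB, hBi, hBc, hz⟩))
  have : Nonempty V := ⟨a⟩
  choose! x hx hxtop using hx
  have hxi : ∀ i < A.card, ∀ j < A.card, ¬ r (x i) (x j) := by
    intro i hI j hJ hr
    obtain ⟨B, hB, hBi, hBc, hjB⟩ := (hx j hJ).2.2
    obtain ⟨z, hzB, hz⟩ := hmeet B hB hBi hBc i hI
    rcases hxtop i hI B hB hBi hBc z hzB hz with rfl | h
    · exact hBi _ hzB _ hjB hr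
    · exact hBi _ hzB _ hjB (ht _ _ _ h hr)
  by_cases hcase : ∃ i < A.card, r (x i) a
  · obtain ⟨i, hI, hr⟩ := hcase
    -- The chain `K` consists of `a` and the part of chain `i` up to `x i`.
    set K : Finset V := S.filter fun z => z = a ∨ (c z = i ∧ (z = x i ∨ r z (x i))) with hK
    have hKa : ∀ z ∈ K, z = a ∨ r z a := by
      intro z hz
      rcases (Finset.mem_filter.1 hz).2 with h | ⟨-, rfl | h⟩
      · exact Or.inl h
      · exact Or.inr hr
      · exact Or.inr (ht _ _ _ h hr)
    have haK : a ∈ K := Finset.mem_filter.2 ⟨haS, Or.inl rfl⟩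
    obtain ⟨c', A', hAS', hA', hc', hch'⟩ := ih (S \ K)
      (Finset.sdiff_ssubset (Finset.filter_subset _ _) ⟨a, haK⟩)
    have hAe : A' ⊆ S.erase a := by
      intro z hz
      have := Finset.mem_sdiff.1 (hAS' hz)
      exact Finset.mem_erase.2 ⟨fun h => this.2 (h ▸ haK), this.1⟩
    have hlt : A'.card < A.card := by
      by_contra hge
      obtain ⟨B, hBA, hBc⟩ := Finset.exists_subset_card_eq (not_lt.1 hge)
      have hBi : IsIndep r B := fun u hu v hv => hA' u (hBA hu) v (hBA hv)
      obtain ⟨z, hzB, hz⟩ := hmeet B (hBA.trans hAe) hBi hBc i hI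
      have h := hxtop i hI B (hBA.trans hAe) hBi hBc z hzB hz
      have h2 := Finset.mem_sdiff.1 (hAS' (hBA hzB))
      exact h2.2 (Finset.mem_filter.2 ⟨h2.1, Or.inr ⟨hz, h⟩⟩)
    refine ⟨fun z => if z ∈ K then A'.card else c' z, A, hAS.trans hsub, hA, ?_, ?_⟩
    · intro v hv
      by_cases hvK : v ∈ K
      · simpa [hvK] using hlt
      · simpa [hvK] using (hc' v (Finset.mem_sdiff.2 ⟨hv, hvK⟩)).trans hlt
    · intro u hu v hv huv
      by_cases huK : u ∈ K <;> by_cases hvK : v ∈ K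
      · rcases (Finset.mem_filter.1 huK).2 with rfl | ⟨h1, -⟩
        · rcases hKa v hvK with h | h
          · exact Or.inl h.symm
          · exact Or.inr (Or.inr h)
        · rcases (Finset.mem_filter.1 hvK).2 with rfl | ⟨h2, -⟩
          · rcases hKa u huK with h | h
            · exact Or.inl h
            · exact Or.inr (Or.inl h)
          · by_cases hua : u = a
            · rcases hKa v hvK with h | h
              · exact Or.inl (hua.trans h.symm)
              · exact Or.inr (Or.inr (hua ▸ h))
            · by_cases hva : v = a
              · rcases hKa u huK with h | h
                · exact Or.inl (h.trans hva.symm)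
                · exact Or.inr (Or.inl (hva ▸ h))
              · exact hch u (Finset.mem_erase.2 ⟨hua, hu⟩) v (Finset.mem_erase.2 ⟨hva, hv⟩)
                  (h1.trans h2.symm)
      · have := hc' v (Finset.mem_sdiff.2 ⟨hv, hvK⟩)
        simp [huK, hvK] at huv
        omega
      · have := hc' u (Finset.mem_sdiff.2 ⟨hu, huK⟩)
        simp [huK, hvK] at huv
        omega
      · simp only [huK, hvK, if_false] at huv
        exact hch' u (Finset.mem_sdiff.2 ⟨hu, huK⟩) v (Finset.mem_sdiff.2 ⟨hv, hvK⟩) huv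
  · push Not at hcase
    set X : Finset V := (Finset.range A.card).image x with hX
    have hXs : ∀ z ∈ X, ∃ i < A.card, x i = z := by
      intro z hz
      simpa [hX] using hz
    have hXc : X.card = A.card := by
      rw [hX, Finset.card_image_of_injOn, Finset.card_range]
      intro i hI j hJ hij
      have h1 := (hx i (by simpa using hI)).2.1
      have h2 := (hx j (by simpa using hJ)).2.1
      rw [← h1, ← h2]
      exact congrArg c hij
    have hXS : X ⊆ S.erase a := by
      intro z hz
      obtain ⟨i, hI, rfl⟩ := hXs z hz
      exact (hx i hI).1
    have haX : a ∉ X := fun h => by simpa using hXS h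
    have hcard : (insert a X).card = A.card + 1 := by
      rw [Finset.card_insert_of_notMem haX, hXc]
    refine ⟨fun z => if z = a then A.card else c z, insert a X, ?_, ?_, ?_, ?_⟩
    · exact Finset.insert_subset haS (hXS.trans hsub)
    · intro u hu v hv
      rcases Finset.mem_insert.1 hu with rfl | hu
      · exact hmax v (Finset.insert_subset haS (hXS.trans hsub) hv)
      · obtain ⟨i, hI, rfl⟩ := hXs u hu
        rcases Finset.mem_insert.1 hv with rfl | hv
        · exact hcase i hI
        · obtain ⟨j, hJ, rfl⟩ := hXs v hv
          exact hxi i hI j hJ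
    · intro v hv
      rw [hcard]
      by_cases hva : v = a
      · simp [hva]
      · simpa [hva] using (hc v (Finset.mem_erase.2 ⟨hva, hv⟩)).trans (Nat.lt_succ_self _)
    · intro u hu v hv huv
      by_cases hua : u = a <;> by_cases hva : v = a
      · exact Or.inl (hua.trans hva.symm)
      · have := hc v (Finset.mem_erase.2 ⟨hva, hv⟩)
        simp [hua, hva] at huv
        omega
      · have := hc u (Finset.mem_erase.2 ⟨hua, hu⟩)
        simp [hua, hva] at huv
        omega
      · simp only [hua, hva, if_false] at huv
        exact hch u (Finset.mem_erase.2 ⟨hua, hu⟩) v (Finset.mem_erase.2 ⟨hva, hv⟩) huv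

/-- The dimension is at most the number of chains in a chain partition. The `i`-th key of `y` is the
number of elements of chain `i` that are at most `y`, refined by a strictly monotone function; it
puts every element of chain `i` above all points incomparable to it. -/
theorem exists_realizer_of_chains (hi : ∀ x, ¬ r x x) (ht : ∀ x y z, r x y → r y z → r x z)
    (n : ℕ) (c : V → ℕ) (hc : ∀ v, c v < n)
    (hch : ∀ u v, c u = c v → u = v ∨ r u v ∨ r v u) :
    ∃ F : List (V → ℕ), F.length = n ∧ IsRealizer r Finset.univ F := by
  classical
  let h : V → ℕ := fun y => (Finset.univ.filter fun z => r z y).card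
  let q : ℕ → V → Finset V := fun i y => Finset.univ.filter fun z => c z = i ∧ (z = y ∨ r z y)
  have hh : ∀ y, h y < Fintype.card V + 1 := fun y =>
    Nat.lt_succ_of_le (Finset.card_le_univ _)
  refine ⟨(List.range n).map fun i y => (q i y).card * (Fintype.card V + 1) + h y, by simp, ?_, ?_⟩
  · intro f hf x _ y _ hxy
    obtain ⟨i, -, rfl⟩ := List.mem_map.1 hf
    have h1 : (q i x).card ≤ (q i y).card := by
      apply Finset.card_le_card
      intro z hz
      simp only [q, Finset.mem_filter, Finset.mem_univ, true_and] at hz ⊢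
      refine ⟨hz.1, Or.inr ?_⟩
      rcases hz.2 with rfl | h
      · exact hxy
      · exact ht _ _ _ h hxy
    have h2 : h x < h y := by
      apply Finset.card_lt_card
      rw [Finset.ssubset_iff_of_subset]
      · exact ⟨x, by simpa using hxy, by simpa using hi x⟩
      · intro z hz
        simp only [Finset.mem_filter, Finset.mem_univ, true_and] at hz ⊢
        exact ht _ _ _ hz hxy
    have := Nat.mul_le_mul_right (Fintype.card V + 1) h1
    show _ + _ < _ + _
    omega
  · intro x _ y _ hne hxy hyx
    refine ⟨_, List.mem_map.2 ⟨c y, List.mem_range.2 (hc y), rfl⟩, ?_⟩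
    have h1 : (q (c y) x).card < (q (c y) y).card := by
      apply Finset.card_lt_card
      rw [Finset.ssubset_iff_of_subset]
      · exact ⟨y, by simp [q], by simp [q, hyx, hne.symm]⟩
      · intro z hz
        simp only [q, Finset.mem_filter, Finset.mem_univ, true_and] at hz ⊢
        refine ⟨hz.1, ?_⟩
        rcases hch z y hz.1 with h | h | h
        · exact Or.inl h
        · exact Or.inr h
        · rcases hz.2 with rfl | h'
          · exact absurd h hyx
          · exact absurd (ht _ _ _ h h') hyx
    have := Nat.mul_le_mul_right (Fintype.card V + 1) (Nat.succ_le_of_lt h1)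
    have h3 := hh x
    have h4 : ((q (c y) x).card + 1) * (Fintype.card V + 1)
      = (q (c y) x).card * (Fintype.card V + 1) + (Fintype.card V + 1) := by ring
    show _ + _ < _ + _
    simp only [Nat.succ_eq_add_one] at this
    omega

/-- Adding one point `x` raises the dimension by at most one. One key `f` of the old realizer is
replaced by two: one places `x` directly above its lower set, the other directly below its upper
set. A pair of old points with `f u < f v` cannot be reversed in both, as this would give
`v < x < u`. In the other keys, `x` is inserted at any admissible place. -/
theorem IsRealizer.insert_point [DecidableEq V] {S : Finset V} {x : V} (hi : ∀ x, ¬ r x x)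
    (ht : ∀ x y z, r x y → r y z → r x z) {f : V → ℕ} {F : List (V → ℕ)}
    (hF : IsRealizer r S (f :: F)) :
    ∃ G : List (V → ℕ), G.length = F.length + 2 ∧ IsRealizer r (insert x S) G := by
  classical
  by_cases hxS : x ∈ S
  · rw [Finset.insert_eq_of_mem hxS]
    refine ⟨f :: f :: F, by simp, ?_, ?_⟩
    · intro g hg
      exact hF.mono g (by simpa using hg)
    · intro u hu v hv h1 h2 h3
      obtain ⟨g, hg, h⟩ := hF.sep u hu v hv h1 h2 h3
      exact ⟨g, by simpa using hg, h⟩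
  let N := Finset.univ.sup f + 1
  have hN : ∀ y, f y < N := fun y => Nat.lt_succ_of_le (Finset.le_sup (Finset.mem_univ y))
  let lo : V → ℕ := fun y => if y = x then N else if r y x then f y else f y + N + 1
  let hi' : V → ℕ := fun y => if y = x then N else if r x y then f y + N + 1 else f y
  let ins : (V → ℕ) → V → ℕ := fun g y =>
    if y = x then (S.filter fun z => r z x).sup fun z => 2 * g z + 3 else 2 * g y + 2
  have hmono := hF.mono
  have hsep := hF.sep
  refine ⟨lo :: hi' :: F.map ins, by simp, ?_, ?_⟩
  · intro g hg u hu v hv huv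
    simp only [List.mem_cons, List.mem_map] at hg
    have hu' : u ≠ x → u ∈ S := fun h => (Finset.mem_insert.1 hu).resolve_left h
    have hv' : v ≠ x → v ∈ S := fun h => (Finset.mem_insert.1 hv).resolve_left h
    have hNu := hN u
    have hNv := hN v
    rcases hg with rfl | rfl | ⟨g, hg, rfl⟩
    · simp only [lo]
      by_cases h1 : u = x <;> by_cases h2 : v = x
      · subst h1 h2; exact absurd huv (hi _)
      · subst h1
        have : ¬ r v u := fun h => hi _ (ht _ _ _ huv h)
        simp [h2, this]
      · subst h2
        simp [h1, huv]; omega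
      · have := hmono f (by simp) u (hu' h1) v (hv' h2) huv
        have h3 : r v x → r u x := fun h => ht _ _ _ huv h
        simp only [h1, h2, if_false]
        split_ifs <;> first | omega | tauto
    · simp only [hi']
      by_cases h1 : u = x <;> by_cases h2 : v = x
      · subst h1 h2; exact absurd huv (hi _)
      · subst h1
        simp [h2, huv]
      · subst h2
        have : ¬ r v u := fun h => hi _ (ht _ _ _ huv h)
        simp [h1, this]; omega
      · have := hmono f (by simp) u (hu' h1) v (hv' h2) huv
        have h3 : r x u → r x v := fun h => ht _ _ _ h huv
        simp only [h1, h2, if_false]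
        split_ifs <;> first | omega | tauto
    · simp only [ins]
      by_cases h1 : u = x <;> by_cases h2 : v = x
      · subst h1 h2; exact absurd huv (hi _)
      · subst h1
        simp only [h2, if_true, if_false]
        rw [Finset.sup_lt_iff (by simp)]
        intro z hz
        obtain ⟨hz1, hz2⟩ := Finset.mem_filter.1 hz
        have := hmono g (by simp [hg]) z hz1 v (hv' h2) (ht _ _ _ hz2 huv)
        omega
      · subst h2
        simp only [h1, if_true, if_false]
        have : 2 * g u + 3 ≤ (S.filter fun z => r z v).sup fun z => 2 * g z + 3 :=
          Finset.le_sup (f := fun z => 2 * g z + 3) (Finset.mem_filter.2 ⟨hu' h1, huv⟩)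
        omega
      · have := hmono g (by simp [hg]) u (hu' h1) v (hv' h2) huv
        simp only [h1, h2, if_false]
        omega
  · intro u hu v hv hne huv hvu
    have hu' : u ≠ x → u ∈ S := fun h => (Finset.mem_insert.1 hu).resolve_left h
    have hv' : v ≠ x → v ∈ S := fun h => (Finset.mem_insert.1 hv).resolve_left h
    by_cases h1 : u = x
    · subst h1
      refine ⟨lo, by simp, ?_⟩
      simp [lo, hne.symm, hvu]
    by_cases h2 : v = x
    · subst h2
      refine ⟨hi', by simp, ?_⟩
      simpa [hi', h1, hvu] using hN u
    obtain ⟨g, hg, hlt⟩ := hsep u (hu' h1) v (hv' h2) hne huv hvu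
    rcases List.mem_cons.1 hg with rfl | hg
    · by_cases h3 : r v x ∧ ¬ r u x
      · refine ⟨hi', by simp, ?_⟩
        have h4 : ¬ r x u := fun h => hvu (ht _ _ _ h3.1 h)
        simp only [hi', h1, h2, h4, if_false]
        split_ifs <;> omega
      · refine ⟨lo, by simp, ?_⟩
        have := hN u
        simp only [lo, h1, h2, if_false]
        split_ifs <;> first | omega | tauto
    · refine ⟨ins g, by simp only [List.mem_cons, List.mem_map]; exact Or.inr (Or.inr ⟨g, hg, rfl⟩), ?_⟩
      simp only [ins, h1, h2, if_false]
      omega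

end Poset

section Base
variable {V : Type*} [Fintype V] {r : V → V → Prop}

/-- A numbering `e` of `V` and a strictly decreasing function `e'` of it, both below `M`. The keys
below divide `ℕ` into blocks of length `M`, and within blocks order the points by `e` or `e'`. -/
theorem exists_numbering (V : Type*) [Fintype V] :
    ∃ (e e' : V → ℕ) (M : ℕ), Function.Injective e ∧ ∀ v, e v + e' v + 1 = M :=
  ⟨fun v => Fintype.equivFin V v, fun v => Fintype.card V - 1 - Fintype.equivFin V v,
    Fintype.card V, fun _ _ h => (Fintype.equivFin V).injective (Fin.ext h),
    fun v => by have := (Fintype.equivFin V v).2; dsimp only; omega⟩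

theorem IsRealizer.dual {S : Finset V} {F : List (V → ℕ)} (hF : IsRealizer (flip r) S F) :
    ∃ G : List (V → ℕ), G.length = F.length ∧ IsRealizer r S G := by
  have hb : ∀ (f : V → ℕ) v, f v ≤ Finset.univ.sup f := fun f v => Finset.le_sup (Finset.mem_univ v)
  refine ⟨F.map fun f v => Finset.univ.sup f - f v, by simp, ?_, ?_⟩
  · intro g hg x hx y hy hxy
    obtain ⟨f, hf, rfl⟩ := List.mem_map.1 hg
    have := hF.mono f hf y hy x hx hxy
    have := hb f x
    show _ - _ < _ - _
    omega
  · intro x hx y hy hne hxy hyx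
    obtain ⟨f, hf, h⟩ := hF.sep y hy x hx hne.symm hxy hyx
    refine ⟨_, List.mem_map.2 ⟨f, hf, rfl⟩, ?_⟩
    have := hb f x
    show _ - _ < _ - _
    omega

/-- Neither `x` nor `y` has elements of `A` above it. Write `A₁₁`, `A₁₀`, `A₀₁`, `A₀₀` for the
points of `A` below both, only `x`, only `y`, none of them. The two orders are
`A₁₀, A₁₁, x, A₀₁, y, A₀₀` and `A₀₀, A₀₁, A₁₁, y, A₁₀, x`, the order inside each class being
reversed; if `x` is below `y`, then `A₁₀` is empty and `y` moves to the end of the second order. -/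
theorem base_up_up [DecidableEq V] (hi : ∀ x, ¬ r x x) (ht : ∀ x y z, r x y → r y z → r x z)
    {A : Finset V} (hA : IsIndep r A) {x y : V} (hxA : x ∉ A) (hyA : y ∉ A) (hne : x ≠ y)
    (hx : ∀ a ∈ A, ¬ r x a) (hy : ∀ a ∈ A, ¬ r y a) (hyx : ¬ r y x) :
    ∃ F : List (V → ℕ), F.length = 2 ∧ IsRealizer r (insert x (insert y A)) F := by
  classical
  obtain ⟨e, e', M, he, hM⟩ := exists_numbering V
  let f : V → ℕ := fun v => if v = x then 2 * M else if v = y then 4 * M else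
    if r v x then (if r v y then M + e v else e v) else
      if r v y then 3 * M + e v else 5 * M + e v
  let g : V → ℕ := fun v => if v = x then 5 * M else
    if v = y then (if r x y then 6 * M else 3 * M) else
    if r v x then (if r v y then 2 * M + e' v else 4 * M + e' v) else
      if r v y then M + e' v else e' v
  have hAx : ∀ a ∈ A, a ≠ x := fun a ha h => hxA (h ▸ ha)
  have hAy : ∀ a ∈ A, a ≠ y := fun a ha h => hyA (h ▸ ha)
  have hmem : ∀ {v}, v ∈ insert x (insert y A) → v = x ∨ v = y ∨ v ∈ A := by
    intro v hv
    simpa using hv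
  refine ⟨[f, g], rfl, ?_, ?_⟩
  · intro k hk u hu v hv huv
    have h1 := hM u
    have h2 := hM v
    have hk : k = f ∨ k = g := by simpa using hk
    rcases hmem hu with hu | hu | hu <;> rcases hmem hv with hv | hv | hv <;>
      rcases hk with rfl | rfl <;> simp only [f, g] <;> grind [IsIndep]
  · intro u hu v hv huv hr1 hr2
    have h1 := hM u
    have h2 := hM v
    have h3 : e u ≠ e v := fun h => huv (he h)
    suffices f u < f v ∨ g u < g v by simpa using this
    rcases hmem hu with hu | hu | hu <;> rcases hmem hv with hv | hv | hv <;>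
      simp only [f, g] <;> grind [IsIndep]

/-- No element of `A` is above `x` and none is below `y`. Write `A₁₁`, `A₁₀`, `A₀₁`, `A₀₀` for the
points of `A` that are both below `x` and above `y`, only below `x`, only above `y`, neither. The
two orders are `A₀₀, A₁₀, y, A₁₁, x, A₀₁` and `y, A₀₁, A₁₁, A₁₀, x, A₀₀`, the order inside each
class being reversed; if `x` and `y` are incomparable, then `A₁₁` is empty and `x`, `y` are
exchanged in the first order. -/
theorem base_up_down [DecidableEq V] (hi : ∀ x, ¬ r x x) (ht : ∀ x y z, r x y → r y z → r x z)
    {A : Finset V} (hA : IsIndep r A) {x y : V} (hxA : x ∉ A) (hyA : y ∉ A) (hne : x ≠ y)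
    (hx : ∀ a ∈ A, ¬ r x a) (hy : ∀ a ∈ A, ¬ r a y) (hxy : ¬ r x y) :
    ∃ F : List (V → ℕ), F.length = 2 ∧ IsRealizer r (insert x (insert y A)) F := by
  classical
  obtain ⟨e, e', M, he, hM⟩ := exists_numbering V
  let f : V → ℕ := fun v => if v = x then (if r y x then 4 * M else 2 * M) else
    if v = y then (if r y x then 2 * M else 4 * M) else
    if r v x then (if r y v then 3 * M + e v else M + e v) else
      if r y v then 5 * M + e v else e v
  let g : V → ℕ := fun v => if v = x then 4 * M else if v = y then 0 else
    if r v x then (if r y v then 2 * M + e' v else 3 * M + e' v) else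
      if r y v then M + e' v else 5 * M + e' v
  have hAx : ∀ a ∈ A, a ≠ x := fun a ha h => hxA (h ▸ ha)
  have hAy : ∀ a ∈ A, a ≠ y := fun a ha h => hyA (h ▸ ha)
  have hmem : ∀ {v}, v ∈ insert x (insert y A) → v = x ∨ v = y ∨ v ∈ A := by
    intro v hv
    simpa using hv
  refine ⟨[f, g], rfl, ?_, ?_⟩
  · intro k hk u hu v hv huv
    have h1 := hM u
    have h2 := hM v
    have hk : k = f ∨ k = g := by simpa using hk
    rcases hmem hu with hu | hu | hu <;> rcases hmem hv with hv | hv | hv <;>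
      rcases hk with rfl | rfl <;> simp only [f, g] <;> grind [IsIndep]
  · intro u hu v hv huv hr1 hr2
    have h1 := hM u
    have h2 := hM v
    have h3 : e u ≠ e v := fun h => huv (he h)
    suffices f u < f v ∨ g u < g v by simpa using this
    rcases hmem hu with hu | hu | hu <;> rcases hmem hv with hv | hv | hv <;>
      simp only [f, g] <;> grind [IsIndep]

/-- An independent set together with two points has dimension at most two. Each of `x`, `y` has no
element of `A` above it, or none below it; up to swapping `x` and `y` and reversing `r`, this leaves
`base_up_up` and `base_up_down`. -/
theorem base_two [DecidableEq V] (hi : ∀ x, ¬ r x x) (ht : ∀ x y z, r x y → r y z → r x z)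
    {A : Finset V} (hA : IsIndep r A) {x y : V} (hxA : x ∉ A) (hyA : y ∉ A) (hne : x ≠ y) :
    ∃ F : List (V → ℕ), F.length = 2 ∧ IsRealizer r (insert x (insert y A)) F := by
  have hswap : insert y (insert x A) = insert x (insert y A) := Finset.insert_comm _ _ _
  have hUU : ∀ r' : V → V → Prop, (∀ x, ¬ r' x x) → (∀ x y z, r' x y → r' y z → r' x z) →
      IsIndep r' A → (∀ a ∈ A, ¬ r' x a) → (∀ a ∈ A, ¬ r' y a) →
      ∃ F : List (V → ℕ), F.length = 2 ∧ IsRealizer r' (insert x (insert y A)) F := by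
    intro r' hi ht hA hx hy
    by_cases h : r' y x
    · rw [← hswap]
      exact base_up_up hi ht hA hyA hxA hne.symm hy hx fun h' => hi _ (ht _ _ _ h h')
    · exact base_up_up hi ht hA hxA hyA hne hx hy h
  have hUD : ∀ z, (∀ a ∈ A, ¬ r z a) ∨ (∀ a ∈ A, ¬ r a z) := by
    intro z
    by_contra! h
    obtain ⟨⟨a, ha, h1⟩, b, hb, h2⟩ := h
    exact hA b hb a ha (ht _ _ _ h2 h1)
  rcases hUD x with hx | hx <;> rcases hUD y with hy | hy
  · exact hUU r hi ht hA hx hy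
  · by_cases hxy : r x y
    · exact hUU r hi ht hA hx fun a ha h => hx a ha (ht _ _ _ hxy h)
    · exact base_up_down hi ht hA hxA hyA hne hx hy hxy
  · by_cases hyx : r y x
    · exact hUU r hi ht hA (fun a ha h => hy a ha (ht _ _ _ hyx h)) hy
    · rw [← hswap]
      exact base_up_down hi ht hA hyA hxA hne.symm hy hx hyx
  · obtain ⟨F, hF, h⟩ := hUU (flip r) hi (fun a b c h1 h2 => ht _ _ _ h2 h1)
      (fun u hu v hv => hA v hv u hu) hx hy
    obtain ⟨G, hG, h'⟩ := h.dual
    exact ⟨G, hG.trans hF, h'⟩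

end Base

/-- An independent set together with `m + 2` further points has dimension at most `m + 2`, by
inserting the points one at a time from `base_two` on. -/
theorem exists_realizer_union {V : Type*} [Fintype V] [DecidableEq V] {r : V → V → Prop}
    (hi : ∀ x, ¬ r x x) (ht : ∀ x y z, r x y → r y z → r x z) {A : Finset V}
    (hA : IsIndep r A) (m : ℕ) : ∀ T : Finset V, Disjoint T A → T.card = m + 2 →
      ∃ F : List (V → ℕ), F.length = m + 2 ∧ IsRealizer r (T ∪ A) F := by
  induction m with
  | zero =>
    intro T hTA hT
    obtain ⟨x, y, hne, rfl⟩ := Finset.card_eq_two.1 hT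
    have hxA : x ∉ A := Finset.disjoint_left.1 hTA (by simp)
    have hyA : y ∉ A := Finset.disjoint_left.1 hTA (by simp)
    have h := base_two hi ht hA hxA hyA hne
    rwa [show insert x (insert y A) = {x, y} ∪ A by ext; simp] at h
  | succ m ih =>
    intro T hTA hT
    obtain ⟨x, T', hx, rfl, hT'⟩ := Finset.card_eq_succ.1 hT
    obtain ⟨F, hF, h⟩ := ih T' (Finset.disjoint_of_subset_left (Finset.subset_insert _ _) hTA) hT'
    obtain ⟨f, F, rfl⟩ := List.exists_cons_of_length_eq_add_one hF
    obtain ⟨G, hG, h'⟩ := h.insert_point (x := x) hi ht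
    refine ⟨G, ?_, by rwa [Finset.insert_union]⟩
    simp at hF
    omega

/-- Hiraguchi's bound for an odd number of points: a strict order on `2 * n + 1 ≥ 5` points has
dimension at most `n`. -/
theorem hiraguchi {V : Type*} [Fintype V] {r : V → V → Prop}
    (hi : ∀ x, ¬ r x x) (ht : ∀ x y z, r x y → r y z → r x z) (n : ℕ) (hn : 2 ≤ n)
    (hV : Fintype.card V = 2 * n + 1) :
    ∃ F : List (V → ℕ), F.length = n ∧ IsRealizer r Finset.univ F := by
  classical
  obtain ⟨c, A, -, hA, hc, hch⟩ := dilworth hi ht (Finset.univ : Finset V)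
  by_cases hAn : A.card ≤ n
  · exact exists_realizer_of_chains hi ht n c (fun v => (hc v (Finset.mem_univ v)).trans_le hAn)
      fun u v => hch u (Finset.mem_univ u) v (Finset.mem_univ v)
  · obtain ⟨B, hBA, hBc⟩ := Finset.exists_subset_card_eq (show n + 1 ≤ A.card by omega)
    have hB : IsIndep r B := fun u hu v hv => hA u (hBA hu) v (hBA hv)
    obtain ⟨m, rfl⟩ := Nat.exists_eq_add_of_le' hn
    have h := exists_realizer_union hi ht hB m Bᶜ disjoint_compl_left
      (by rw [Finset.card_compl]; omega)
    rwa [Finset.union_comm, Finset.union_compl] at h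

/-! ### From realizers to words -/

section Words

variable {V : Type*} [DecidableEq V]

/-- The subsequence of `w` formed by the occurrences of `x` and `y`. -/
abbrev restrict (w : List V) (x y : V) : List V := w.filter fun z => decide (z = x ∨ z = y)

theorem restrict_comm (w : List V) (x y : V) : restrict w x y = restrict w y x := by
  unfold restrict
  congr 1
  funext z
  simp [or_comm]

theorem mem_restrict {w : List V} {x y z : V} : z ∈ restrict w x y → z = x ∨ z = y := by
  intro h
  simpa using (List.mem_filter.1 h).2

/-- Two letters alternate iff the restricted word stays alternating with `y` put in front (it
starts with `x`) or with `x` put in front (it starts with `y`). -/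
theorem alternate_iff {w : List V} {x y : V} (hne : x ≠ y) : Alternate w x y ↔
    (y :: restrict w x y).IsChain (· ≠ ·) ∨ (x :: restrict w x y).IsChain (· ≠ ·) := by
  have hA : Alternate w x y ↔ (restrict w x y).IsChain (· ≠ ·) := Iff.rfl
  rw [hA]
  have hm := fun z => mem_restrict (w := w) (x := x) (y := y) (z := z)
  generalize restrict w x y = l at hm
  cases l with
  | nil => simp
  | cons a l =>
    rcases hm a (by simp) with rfl | rfl
    · simp [hne.symm]
    · simp [hne]

theorem isChain_flatten_iff {V : Type*} {x y : V} (hne : x ≠ y) (Bs : List (List V))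
    (hB : ∀ B ∈ Bs, B = [x, y] ∨ B = [y, x]) :
    (y :: Bs.flatten).IsChain (· ≠ ·) ↔ ∀ B ∈ Bs, B = [x, y] := by
  induction Bs with
  | nil => simp
  | cons B Bs ih =>
    have ih := ih fun B h => hB B (by simp [h])
    rcases hB B (by simp) with rfl | rfl
    · simp [hne, hne.symm, ih]
    · simp [hne.symm]

theorem restrict_eq_of_perm {B : List V} (hnd : B.Nodup) (hall : ∀ v, v ∈ B) {x y : V}
    (hne : x ≠ y) : restrict B x y = [x, y] ∨ restrict B x y = [y, x] := by
  have hp : (restrict B x y).Perm [x, y] := by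
    rw [List.perm_ext_iff_of_nodup (hnd.filter _) (by simp [hne])]
    intro z
    simp [hall]
  have h2 := hp.length_eq
  obtain ⟨a, b, hab⟩ := List.length_eq_two.1 h2
  have hnd' : (restrict B x y).Nodup := hnd.filter _
  have ha := mem_restrict (w := B) (x := x) (y := y) (z := a) (by simp [hab])
  have hb := mem_restrict (w := B) (x := x) (y := y) (z := b) (by simp [hab])
  rw [hab] at hnd' ⊢
  rcases ha with rfl | rfl <;> rcases hb with rfl | rfl <;> simp_all

/-- Each key sorts the vertices into a permutation. In the concatenation of these permutations two
letters alternate iff they appear in the same order in every one of them, that is, iff they are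
comparable. -/
theorem kRepresentable_of_realizer [Fintype V] {G : SimpleGraph V} {r : V → V → Prop}
    (hG : ∀ x y, G.Adj x y ↔ (r x y ∨ r y x)) {F : List (V → ℕ)} (hF0 : F ≠ [])
    (hF : IsRealizer r Finset.univ F) : KRepresentable G F.length := by
  let srt : (V → ℕ) → List V := fun f =>
    (Finset.univ : Finset V).toList.mergeSort fun a b => decide (f a ≤ f b)
  have hperm : ∀ f, (srt f).Perm (Finset.univ : Finset V).toList := fun f => List.mergeSort_perm _ _
  have hnd : ∀ f, (srt f).Nodup := fun f => (hperm f).nodup_iff.2 (Finset.nodup_toList _)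
  have hall : ∀ f v, v ∈ srt f := fun f v => (hperm f).mem_iff.2 (by simp)
  have hlt : ∀ f : V → ℕ, ∀ x y, f x < f y → restrict (srt f) x y = [x, y] := by
    intro f x y h
    have hne : x ≠ y := by rintro rfl; exact lt_irrefl _ h
    refine (restrict_eq_of_perm (hnd f) (hall f) hne).resolve_right fun h' => ?_
    have hs : (srt f).Pairwise fun a b => decide (f a ≤ f b) = true :=
      List.pairwise_mergeSort (fun a b c => by simpa using le_trans)
        (fun a b => by simpa using le_total _ _) _
    have h2 := hs.sublist (List.filter_sublist (p := fun z => decide (z = x ∨ z = y)))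
    have h3 : (restrict (srt f) x y).Pairwise fun a b => decide (f a ≤ f b) = true := h2
    rw [h'] at h3
    simp at h3
    omega
  refine ⟨(F.map srt).flatten, ?_, ?_, ?_⟩
  · intro v
    rw [List.count_flatten, List.map_map]
    have : F.map (List.count v ∘ srt) = F.map fun _ => 1 :=
      List.map_congr_left fun f _ => List.count_eq_one_of_mem (hnd f) (hall f v)
    rw [this]
    simp
  · intro v
    obtain ⟨f, hf⟩ := List.exists_mem_of_ne_nil F hF0
    exact List.mem_flatten.2 ⟨srt f, List.mem_map.2 ⟨f, hf, rfl⟩, hall f v⟩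
  · intro x y hne
    have hres : restrict (F.map srt).flatten x y =
        (F.map fun f => restrict (srt f) x y).flatten := by
      simp [restrict, List.filter_flatten, List.map_map, Function.comp_def]
    have hB : ∀ B ∈ F.map (fun f => restrict (srt f) x y), B = [x, y] ∨ B = [y, x] := by
      intro B hB
      obtain ⟨f, -, rfl⟩ := List.mem_map.1 hB
      exact restrict_eq_of_perm (hnd f) (hall f) hne
    rw [alternate_iff hne, hres, isChain_flatten_iff hne _ hB,
      isChain_flatten_iff hne.symm _ fun B h => (hB B h).symm, hG]
    simp only [List.mem_map, forall_exists_index, and_imp, forall_apply_eq_imp_iff₂]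
    constructor
    · intro h
      by_contra hr
      push Not at hr
      obtain ⟨f, hf, h1⟩ := hF.sep x (by simp) y (by simp) hne hr.1 hr.2
      obtain ⟨g, hg, h2⟩ := hF.sep y (by simp) x (by simp) hne.symm hr.2 hr.1
      have h3 := hlt f x y h1
      have h4 := hlt g y x h2
      rw [restrict_comm] at h4
      rcases h with h | h
      · have := h g hg
        rw [h4] at this
        simp [hne.symm] at this
      · have := h f hf
        rw [h3] at this
        simp [hne] at this
    · rintro (h | h)
      · exact Or.inl fun f hf => hlt f x y (hF.mono f hf x (by simp) y (by simp) h)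
      · exact Or.inr fun f hf => by
          rw [restrict_comm]
          exact hlt f y x (hF.mono f hf y (by simp) x (by simp) h)

theorem kRepresentable_of_isComparability [Fintype V] {G : SimpleGraph V} (n : ℕ) (hn : 2 ≤ n)
    (hV : Fintype.card V = 2 * n + 1) (hG : IsComparability G) : KRepresentable G n := by
  obtain ⟨o, ho⟩ := hG
  obtain ⟨F, rfl, h⟩ := hiraguchi (r := o.dir) (fun x h => o.not_both x x ⟨h, h⟩) ho n hn hV
  refine kRepresentable_of_realizer o.adj_iff ?_ h
  rintro rfl
  simp at hn

end Words

/-! ### Alternation, prefix counts and rotation -/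

section LowerBound

section Counts

variable {V : Type*} [DecidableEq V]

/-- The number of occurrences of `x` among the first `m` letters of `w`. -/
abbrev cnt (w : List V) (x : V) (m : ℕ) : ℕ := (w.take m).count x

/-- `x` and `y` alternate in `w` starting with `x` (or do not occur at all) iff in every prefix of
`w` the letter `x` occurs as often as `y` or once more. -/
theorem isChain_cons_restrict_iff (w : List V) : ∀ {x y : V}, x ≠ y →
    ((y :: restrict w x y).IsChain (· ≠ ·) ↔
      ∀ m, cnt w y m ≤ cnt w x m ∧ cnt w x m ≤ cnt w y m + 1) := by
  induction w with
  | nil => intro x y _; simp [cnt]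
  | cons c w ih =>
    intro x y hne
    have hs : ∀ z m, cnt (c :: w) z (m + 1) = cnt w z m + if c = z then 1 else 0 := by
      intro z m
      simp [cnt, List.count_cons]
    have h0 : ∀ z, cnt (c :: w) z 0 = 0 := fun z => by simp [cnt]
    have hall : ∀ p : ℕ → Prop, (∀ m, p m) ↔ p 0 ∧ ∀ m, p (m + 1) := fun p =>
      ⟨fun h => ⟨h 0, fun m => h _⟩, fun h m => by cases m; exacts [h.1, h.2 _]⟩
    rw [hall]
    simp only [hs, h0]
    by_cases hx : c = x
    · subst hx
      have hr : restrict (c :: w) c y = c :: restrict w y c := by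
        rw [restrict_comm w y c]; simp [restrict]
      rw [hr, List.isChain_cons_cons, ih hne.symm]
      simp only [hne, hne.symm, ne_eq, not_false_eq_true, true_and, if_true, if_false]
      constructor
      · intro h
        refine ⟨by omega, fun m => ?_⟩
        have := h m
        omega
      · intro h m
        have := h.2 m
        omega
    · by_cases hy : c = y
      · subst hy
        have hr : restrict (c :: w) x c = c :: restrict w x c := by simp [restrict]
        rw [hr, List.isChain_cons_cons]
        simp only [ne_eq, not_true_eq_false, false_and, false_iff, hx, if_true, if_false]
        intro h
        have := h.2 0
        simp [cnt] at this
      · have hr : restrict (c :: w) x y = restrict w x y := by simp [restrict, hx, hy]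
        rw [hr, ih hne]
        simp [hx, hy]

theorem alternate_iff_cnt {w : List V} {x y : V} (hne : x ≠ y) : Alternate w x y ↔
    (∀ m, cnt w y m ≤ cnt w x m ∧ cnt w x m ≤ cnt w y m + 1) ∨
      (∀ m, cnt w x m ≤ cnt w y m ∧ cnt w y m ≤ cnt w x m + 1) := by
  rw [alternate_iff hne, isChain_cons_restrict_iff w hne, restrict_comm w x y,
    isChain_cons_restrict_iff w hne.symm]

/-- Alternation means that the discrepancy `cnt w x m - cnt w y m` varies by at most one. Unlike
`alternate_iff_cnt`, this form does not refer to the starting point of the word, hence is suited to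
rotations. -/
theorem alternate_iff_discrepancy {w : List V} {x y : V} (hne : x ≠ y) : Alternate w x y ↔
    ∀ m m', cnt w x m + cnt w y m' ≤ cnt w x m' + cnt w y m + 1 := by
  rw [alternate_iff_cnt hne]
  constructor
  · rintro (h | h) m m' <;> have := h m <;> have := h m' <;> omega
  · intro h
    by_contra hc
    rw [not_or, not_forall, not_forall] at hc
    obtain ⟨⟨m, hm⟩, m', hm'⟩ := hc
    have h1 := h m' m
    have h2 := h m 0
    have h3 := h 0 m
    have h4 := h m' 0
    have h5 := h 0 m'
    have h0 : ∀ z, cnt w z 0 = 0 := fun z => by simp [cnt]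
    rw [h0, h0] at h2 h3 h4 h5
    omega

theorem alternate_rotate_one {c : V} {w : List V} {x y : V} (hne : x ≠ y)
    (hxy : (c :: w).count x = (c :: w).count y) :
    Alternate (w ++ [c]) x y ↔ Alternate (c :: w) x y := by
  set δ : V → ℕ := fun z => if c = z then 1 else 0 with hδ
  have hs : ∀ z m, cnt (c :: w) z (m + 1) = cnt w z m + δ z := by
    intro z m
    simp [cnt, List.count_cons, hδ]
  have h0 : ∀ z, cnt (c :: w) z 0 = 0 := fun z => by simp [cnt]
  have hle : ∀ z m, m ≤ w.length → cnt (w ++ [c]) z m = cnt w z m := by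
    intro z m hm
    simp [cnt, List.take_append_of_le_length hm]
  have hgt : ∀ z m, w.length < m → cnt (w ++ [c]) z m = w.count z + δ z := by
    intro z m hm
    have : (w ++ [c]).take m = w ++ [c] := List.take_of_length_le (by simp; omega)
    simp [cnt, this, List.count_append, hδ, List.count_singleton]
  have hge : ∀ z m, w.length ≤ m → cnt w z m = w.count z := by
    intro z m hm
    simp [cnt, List.take_of_length_le hm]
  have hw : w.count x + δ x = w.count y + δ y := by
    simpa [List.count_cons, hδ] using hxy
  -- Up to a constant, the discrepancies of the two words take the same values.
  have h1 : ∀ m, ∃ m', cnt (w ++ [c]) x m + δ x + cnt (c :: w) y m' =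
      cnt (w ++ [c]) y m + δ y + cnt (c :: w) x m' := by
    intro m
    rcases le_or_gt m w.length with hm | hm
    · refine ⟨m + 1, ?_⟩
      rw [hs, hs, hle _ _ hm, hle _ _ hm]; omega
    · refine ⟨1, ?_⟩
      have hx := hs x 0
      have hy := hs y 0
      rw [hgt _ _ hm, hgt _ _ hm]
      simp [cnt] at hx hy ⊢
      omega
  have h2 : ∀ m', ∃ m, cnt (w ++ [c]) x m + δ x + cnt (c :: w) y m' =
      cnt (w ++ [c]) y m + δ y + cnt (c :: w) x m' := by
    intro m'
    rcases m' with _ | m'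
    · refine ⟨w.length, ?_⟩
      rw [hle _ _ le_rfl, hle _ _ le_rfl, hge _ _ le_rfl, hge _ _ le_rfl, h0, h0]
      omega
    · rcases le_or_gt m' w.length with hm | hm
      · refine ⟨m', ?_⟩
        rw [hs, hs, hle _ _ hm, hle _ _ hm]; omega
      · refine ⟨w.length, ?_⟩
        rw [hs, hs, hle _ _ le_rfl, hle _ _ le_rfl, hge _ _ le_rfl, hge _ _ le_rfl,
          hge _ _ hm.le, hge _ _ hm.le]
        omega
  rw [alternate_iff_discrepancy hne, alternate_iff_discrepancy hne]
  constructor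
  · intro h m m'
    obtain ⟨p, hp⟩ := h2 m
    obtain ⟨q, hq⟩ := h2 m'
    have := h p q
    omega
  · intro h m m'
    obtain ⟨p, hp⟩ := h1 m
    obtain ⟨q, hq⟩ := h1 m'
    have := h p q
    omega

theorem represents_rotate {G : SimpleGraph V} {k : ℕ} (u : List V) : ∀ v : List V,
    (∀ z, (u ++ v).count z = k) → Represents (u ++ v) G → Represents (v ++ u) G := by
  induction u with
  | nil => intro v _ h; simpa using h
  | cons c u ih =>
    intro v hk h
    have h' : Represents (u ++ (v ++ [c])) G := by
      refine ⟨fun z => ?_, fun x y hne => ?_⟩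
      · have := h.1 z
        simp at this ⊢
        tauto
      · rw [← h.2 x y hne, ← List.append_assoc]
        exact alternate_rotate_one hne ((hk x).trans (hk y).symm)
    have := ih (v ++ [c]) (fun z => by
      rw [← hk z]; simp [List.count_append, List.count_cons]; omega) h'
    simpa using this

/-- Rotating a uniform word does not change the graph it represents, so any chosen letter can be
moved to the front. -/
theorem exists_represents_cons {G : SimpleGraph V} {k : ℕ} (a : V) (h : KRepresentable G k) :
    ∃ w : List V, (∀ z, (a :: w).count z = k) ∧ Represents (a :: w) G := by
  obtain ⟨w, hk, hw⟩ := h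
  obtain ⟨u, v, rfl⟩ := List.append_of_mem (hw.1 a)
  refine ⟨v ++ u, fun z => ?_, represents_rotate u (a :: v) hk hw⟩
  rw [← hk z]
  simp [List.count_append, List.count_cons]
  omega

/-! ### The orders of the `b`-th occurrences -/

theorem cnt_mono (w : List V) (x : V) : Monotone (cnt w x) := fun _ _ h =>
  ((List.take_prefix_take_left h).sublist).count_le x

/-- The `b`-th occurrence of `x` in `w` precedes that of `y`, with occurrences numbered from `0`:
some prefix contains more than `b` letters `x` but at most `b` letters `y`. -/
def occBefore (w : List V) (b : ℕ) (x y : V) : Prop := ∃ m, b < cnt w x m ∧ cnt w y m ≤ b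

theorem occBefore_irrefl {w : List V} {b : ℕ} {x : V} : ¬ occBefore w b x x := by
  rintro ⟨m, h1, h2⟩
  omega

theorem occBefore_trans {w : List V} {b : ℕ} {x y z : V} (h1 : occBefore w b x y)
    (h2 : occBefore w b y z) : occBefore w b x z := by
  obtain ⟨m, hm1, hm2⟩ := h1
  obtain ⟨p, hp1, hp2⟩ := h2
  have hmp : m ≤ p := by
    by_contra h
    have := cnt_mono w y (not_le.1 h).le
    omega
  exact ⟨m, hm1, (cnt_mono w z hmp).trans hp2⟩

theorem occBefore_total {w : List V} {b : ℕ} {x y : V} (hne : x ≠ y) (hx : b < w.count x) :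
    occBefore w b x y ∨ occBefore w b y x := by
  by_contra! hc
  have hiff : ∀ m, b < cnt w x m ↔ b < cnt w y m := by
    intro m
    constructor
    · intro h
      by_contra h'
      exact hc.1 ⟨m, h, not_lt.1 h'⟩
    · intro h
      by_contra h'
      exact hc.2 ⟨m, h, not_lt.1 h'⟩
  have hex : ∃ m, b < cnt w x m := ⟨w.length, by simpa [cnt] using hx⟩
  classical
  have h1 := Nat.find_spec hex
  have h2 := (hiff _).1 h1
  have hpos : Nat.find hex ≠ 0 := by
    intro h
    rw [h] at h1
    simp [cnt] at h1
  obtain ⟨p, hp⟩ := Nat.exists_eq_succ_of_ne_zero hpos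
  have h3 : ¬ b < cnt w x p := Nat.find_min hex (by omega)
  have h4 : ¬ b < cnt w y p := fun h => h3 ((hiff p).2 h)
  rw [hp] at h1 h2
  simp only [cnt, Nat.succ_eq_add_one, List.take_add_one, List.count_append] at h1 h2 h3 h4
  cases hq : w[p]? with
  | none => simp [hq] at h1; omega
  | some q =>
    simp only [hq, Option.toList_some, List.count_singleton] at h1 h2
    by_cases hqx : q = x
    · subst hqx
      simp [hne] at h2
      omega
    · simp [hqx] at h1
      omega

/-- In a `k`-uniform word that begins with `a`, consider two letters that both alternate with `a`.
They alternate with each other iff the orders of their `b`-th occurrences agree for all `b < k`: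
alternation with `a` keeps the two prefix counts within one of each other. -/
theorem alternate_iff_occBefore {a : V} {w : List V} {k : ℕ} (hk : ∀ z, (a :: w).count z = k)
    {x y : V} (hne : x ≠ y) (hxa : x ≠ a) (hya : y ≠ a) (hx : Alternate (a :: w) a x)
    (hy : Alternate (a :: w) a y) : Alternate (a :: w) x y ↔
      (∀ b < k, occBefore (a :: w) b x y) ∨ ∀ b < k, occBefore (a :: w) b y x := by
  have hbound : ∀ z, z ≠ a → Alternate (a :: w) a z →
      ∀ m, cnt (a :: w) z m ≤ cnt (a :: w) a m ∧ cnt (a :: w) a m ≤ cnt (a :: w) z m + 1 := by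
    intro z hz h
    rcases (alternate_iff_cnt hz.symm).1 h with h | h
    · exact h
    · have := h 1
      simp [cnt, hz.symm] at this
  have hbx := hbound x hxa hx
  have hby := hbound y hya hy
  rw [alternate_iff_cnt hne]
  -- `x` leads `y` at all times iff each occurrence of `x` precedes that of `y`.
  have key : ∀ x y, x ≠ y → (∀ m, cnt (a :: w) x m ≤ cnt (a :: w) y m + 1) →
      ((∀ m, cnt (a :: w) y m ≤ cnt (a :: w) x m ∧ cnt (a :: w) x m ≤ cnt (a :: w) y m + 1) ↔
        ∀ b < k, occBefore (a :: w) b x y) := by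
    intro x y hne hle
    constructor
    · intro h b hb
      refine (occBefore_total hne ((hk x).symm ▸ hb)).resolve_right ?_
      rintro ⟨m, h1, h2⟩
      have := h m
      omega
    · intro h m
      refine ⟨?_, hle m⟩
      by_contra hc
      have hb : cnt (a :: w) x m < k := by
        have : cnt (a :: w) y m ≤ (a :: w).count y := (List.take_sublist _ _).count_le y
        rw [hk] at this
        omega
      exact occBefore_irrefl (occBefore_trans (h _ hb) ⟨m, by omega, le_rfl⟩)
  rw [key x y hne (fun m => by have := hbx m; have := hby m; omega),
    key y x hne.symm (fun m => by have := hbx m; have := hby m; omega)]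

end Counts

/-! ### The lower bound for the crown with apex -/

theorem crown_adj_inl_inr {n : ℕ} {i j : Fin n} :
    (crown n).Adj (Sum.inl i) (Sum.inr j) ↔ i ≠ j := by
  simp [crown]

theorem crown_not_adj_inl {n : ℕ} {i j : Fin n} :
    ¬ (crown n).Adj (Sum.inl i) (Sum.inl j) := by
  simp [crown]

theorem crown_not_adj_inr {n : ℕ} {i j : Fin n} :
    ¬ (crown n).Adj (Sum.inr i) (Sum.inr j) := by
  simp [crown]

/-- A family of `k` strict linear orders on the vertices of the crown graph, in which two vertices
are adjacent iff all the orders agree on them. -/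
structure CrownOrders (n k : ℕ) (lt : Fin k → Fin n ⊕ Fin n → Fin n ⊕ Fin n → Prop) : Prop where
  irrefl : ∀ b x, ¬ lt b x x
  trans : ∀ b x y z, lt b x y → lt b y z → lt b x z
  total : ∀ b x y, x ≠ y → lt b x y ∨ lt b y x
  adj_iff : ∀ x y, x ≠ y → ((crown n).Adj x y ↔ (∀ b, lt b x y) ∨ ∀ b, lt b y x)

theorem CrownOrders.swap {n k : ℕ} {lt : Fin k → Fin n ⊕ Fin n → Fin n ⊕ Fin n → Prop}
    (h : CrownOrders n k lt) : CrownOrders n k fun b x y => lt b y x where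
  irrefl := h.irrefl
  trans := fun b x y z h1 h2 => h.trans b z y x h2 h1
  total := fun b x y hne => (h.total b x y hne).symm
  adj_iff := fun x y hne => (h.adj_iff x y hne).trans or_comm

/-- If some `i₀` lies below some `j₀'` in all the orders, then, since a vertex cannot lie strictly
between two nonadjacent ones in every order and the crown is connected, `i` lies below `j'` in all
orders for all `i ≠ j`. An order that puts `i'` below `i` and `j'` below `j` would contain the
cycle `i' < i < j' < j < i'`; so distinct `i` are reversed in distinct orders. -/
theorem CrownOrders.le_of_lt {n k : ℕ} {lt : Fin k → Fin n ⊕ Fin n → Fin n ⊕ Fin n → Prop}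
    (h : CrownOrders n k lt) (hn : 3 ≤ n) {i₀ j₀ : Fin n}
    (h0 : ∀ b, lt b (Sum.inl i₀) (Sum.inr j₀)) : n ≤ k := by
  have hdich : ∀ i j, i ≠ j → (∀ b, lt b (Sum.inl i) (Sum.inr j)) ∨
      ∀ b, lt b (Sum.inr j) (Sum.inl i) := fun i j hne =>
    (h.adj_iff (Sum.inl i) (Sum.inr j) (by simp)).1 (crown_adj_inl_inr.2 hne)
  have hright : ∀ i j m, m ≠ i → (∀ b, lt b (Sum.inl i) (Sum.inr j)) →
      ∀ b, lt b (Sum.inl i) (Sum.inr m) := by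
    intro i j m hm hE
    by_cases hmj : m = j
    · rwa [hmj]
    · refine (hdich i m hm.symm).resolve_right fun h' => ?_
      exact crown_not_adj_inr ((h.adj_iff (Sum.inr m) (Sum.inr j) (by simpa using hmj)).2
        (Or.inl fun b => h.trans b _ _ _ (h' b) (hE b)))
  have hleft : ∀ i j l, l ≠ j → (∀ b, lt b (Sum.inl i) (Sum.inr j)) →
      ∀ b, lt b (Sum.inl l) (Sum.inr j) := by
    intro i j l hl hE
    by_cases hli : l = i
    · rwa [hli]
    · refine (hdich l j hl).resolve_right fun h' => ?_
      exact crown_not_adj_inl ((h.adj_iff (Sum.inl i) (Sum.inl l)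
        (by simpa using fun e => hli e.symm)).2
        (Or.inl fun b => h.trans b _ _ _ (hE b) (h' b)))
  have hall : ∀ i j, i ≠ j → ∀ b, lt b (Sum.inl i) (Sum.inr j) := by
    intro i j hne
    obtain ⟨m, hm⟩ : ∃ m, m ∉ ({i₀, i} : Finset (Fin n)) := by
      by_contra! hc
      have h1 : (Finset.univ : Finset (Fin n)) ⊆ {i₀, i} := fun m _ => hc m
      have h2 := (Finset.card_le_card h1).trans Finset.card_le_two
      simp at h2
      omega
    simp only [Finset.mem_insert, Finset.mem_singleton, not_or] at hm
    exact hright i m j hne.symm (hleft i₀ m i (Ne.symm hm.2) (hright i₀ j₀ m hm.1 h0))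
  have hrev : ∀ i, ∃ b, lt b (Sum.inr i) (Sum.inl i) := by
    intro i
    by_contra! hc
    refine crown_adj_inl_inr.1 ((h.adj_iff (Sum.inl i) (Sum.inr i) (by simp)).2
      (Or.inl fun b => ?_)) rfl
    exact (h.total b _ _ (by simp)).resolve_right (hc b)
  choose β hβ using hrev
  have hinj : Function.Injective β := by
    intro i j hb
    by_contra hne
    have h1 := hβ i
    have h2 := hβ j
    rw [← hb] at h2
    exact h.irrefl _ _ (h.trans _ _ _ _ (h.trans _ _ _ _ h1 (hall i j hne _))
      (h.trans _ _ _ _ h2 (hall j i (Ne.symm hne) _)))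
  simpa using Fintype.card_le_of_injective β hinj

/-- The bound for `n = 2`, where the crown graph is disconnected, only uses that two nonadjacent
vertices require two orders. -/
theorem CrownOrders.le {n k : ℕ} {lt : Fin k → Fin n ⊕ Fin n → Fin n ⊕ Fin n → Prop}
    (h : CrownOrders n k lt) (hn : 2 ≤ n) : n ≤ k := by
  let i₀ : Fin n := ⟨0, by omega⟩
  let i₁ : Fin n := ⟨1, by omega⟩
  have hne : i₀ ≠ i₁ := by simp [i₀, i₁]
  rcases hn.lt_or_eq with hn | hn
  · rcases (h.adj_iff (Sum.inl i₀) (Sum.inr i₁) (by simp)).1 (crown_adj_inl_inr.2 hne) with h' | h'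
    · exact h.le_of_lt hn h'
    · exact h.swap.le_of_lt hn h'
  · by_contra hk
    have : Subsingleton (Fin k) := Fin.subsingleton_iff_le_one.2 (by omega)
    refine crown_not_adj_inl ((h.adj_iff (Sum.inl i₀) (Sum.inl i₁) (by simpa using hne)).2 ?_)
    rcases isEmpty_or_nonempty (Fin k) with he | ⟨⟨b⟩⟩
    · exact Or.inl fun b => he.elim b
    · refine (h.total b (Sum.inl i₀) (Sum.inl i₁) (by simpa using hne)).imp ?_ ?_ <;>
      · intro h' b'
        rwa [Subsingleton.elim b' b]

theorem apexCrown_adj_none {n : ℕ} (u : Fin n ⊕ Fin n) : (apexCrown n).Adj none (some u) := by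
  simp [apexCrown]

theorem apexCrown_adj_some {n : ℕ} (u v : Fin n ⊕ Fin n) :
    (apexCrown n).Adj (some u) (some v) ↔ (crown n).Adj u v := by
  simp only [apexCrown, SimpleGraph.fromRel_adj, ne_eq, Option.some.injEq]
  constructor
  · rintro ⟨-, h | h⟩
    exacts [h, h.symm]
  · intro h
    exact ⟨h.ne, Or.inl h⟩

theorem le_of_kRepresentable_apexCrown {n k : ℕ} (hn : 2 ≤ n)
    (h : KRepresentable (apexCrown n) k) : n ≤ k := by
  obtain ⟨w, hk, hw⟩ := exists_represents_cons none h
  have hapex : ∀ u : Fin n ⊕ Fin n, Alternate (none :: w) none (some u) := fun u =>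
    (hw.2 none (some u) (by simp)).2 (apexCrown_adj_none u)
  have horders : CrownOrders n k fun b x y => occBefore (none :: w) b (some x) (some y) :=
    { irrefl := fun b x => occBefore_irrefl
      trans := fun b x y z => occBefore_trans
      total := fun b x y hne => occBefore_total (by simpa using hne) (by rw [hk]; exact b.2)
      adj_iff := by
        intro x y hne
        have hne' : some x ≠ some y := by simpa using hne
        rw [← apexCrown_adj_some, ← hw.2 _ _ hne',
          alternate_iff_occBefore hk hne' (by simp) (by simp) (hapex x) (hapex y)]
        simp [Fin.forall_iff] }
  exact horders.le hn

/-- Orient the edges from the apex to everything else, and from `i` to `j'`. -/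
theorem isComparability_apexCrown (n : ℕ) : IsComparability (apexCrown n) := by
  let d : Option (Fin n ⊕ Fin n) → Option (Fin n ⊕ Fin n) → Prop := fun a b =>
    match a, b with
    | none, some _ => True
    | some (Sum.inl i), some (Sum.inr j) => i ≠ j
    | _, _ => False
  refine ⟨⟨d, ?_, ?_⟩, ?_⟩
  · rintro (_ | i | i) (_ | j | j) <;> simp [d, apexCrown, crown]
  · rintro (_ | i | i) (_ | j | j) <;> simp [d]
  · rintro (_ | i | i) (_ | j | j) (_ | l | l) <;> simp [d]

end LowerBound

/-- For `n ≥ 2`, the graph `G_n` has the highest representation number among all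
comparability graphs on `2n+1` vertices: `R(G_n) = n`, and every comparability graph `G`
on `2n+1` vertices satisfies `R(G) ≤ n`. -/
theorem apexCrown_maximal_among_comparability (n : ℕ) (hn : 2 ≤ n) :
    IsLeast {k : ℕ | KRepresentable (apexCrown n) k} n ∧
    ∀ (V : Type) [Fintype V] [DecidableEq V] (G : SimpleGraph V),
      Fintype.card V = 2 * n + 1 → IsComparability G →
      ∃ k ≤ n, KRepresentable G k := by
  refine ⟨⟨?_, fun k hk => le_of_kRepresentable_apexCrown hn hk⟩, ?_⟩
  · exact kRepresentable_of_isComparability n hn (by simp; omega) (isComparability_apexCrown n)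
  · intro V _ _ G hV hG
    exact ⟨n, le_rfl, kRepresentable_of_isComparability n hn hV hG⟩
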